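/- Let condition B hold, let v_ε → ∞ as ε → 0, and assume condition H: f_ε > 0 for all sufficiently small ε. Then: (i) for every T > 0 and δ > 0, P(sup_{0≤t≤T} |f_ε^{−1}κ_ε(t) − t| > δ) → 0 as ε → 0; (ii) condition I: f_ε → f₀ ∈ [0, ∞] as ε → 0 is necessary and sufficient for the convergence in distribution (with possibly improper limit) of κ_ε(1), and in that case the limit is the constant f₀ and κ_ε(t) → f₀t in probability for every t > 0; (iii) if f₀ < ∞ then for every T, δ > 0, P(sup_{0≤t≤T} |κ_ε(t) − f₀t| > δ) → 0 as ε → 0; (iv) if f₀ = ∞ then min(T, κ_ε(t)) → T in probability as ε → 0 for every T > 0 and t > 0. -/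

import Mathlib

open MeasureTheory Filter Set
open scoped Topology ENNReal

noncomputable section

/-- Condition B: there exists a ring chain of states `c 0, c 1, …, c N = c 0`
containing all states of the phase space, with
`liminf_{ε→0+} p ε (c (k-1)) (c k) > 0` for `k = 1, …, N`. -/
def CondB {m : ℕ} (p : ℝ → Fin m → Fin m → ℝ) : Prop :=
  ∃ N : ℕ, 0 < N ∧ ∃ c : ℕ → Fin m, c N = c 0 ∧
    (∀ i : Fin m, ∃ k ≤ N, c k = i) ∧
    ∀ k < N, 0 < Filter.liminf (fun ε => p ε (c k) (c (k + 1))) (𝓝[>] (0 : ℝ))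

/-- `π` is a stationary distribution of the transition matrix `p`. -/
def IsStationaryDist {m : ℕ} (p : Fin m → Fin m → ℝ) (π : Fin m → ℝ) : Prop :=
  (∀ i, 0 ≤ π i) ∧ (∑ i, π i = 1) ∧ ∀ j, π j = ∑ i, π i * p i j

/-- The deterministic-reward step-sum process `κ_ε(t) = Σ_{n=1}^{[t v_ε]} f_{ε,η_{ε,n−1}}`. -/
def fStep {m : ℕ} {Ω : Type} (η : ℝ → ℕ → Ω → Fin m) (f : ℝ → Fin m → ℝ)
    (v : ℝ → ℝ) (ε t : ℝ) (ω : Ω) : ℝ :=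
  ∑ n ∈ Finset.Icc 1 (Nat.floor (t * v ε)), f ε (η ε (n - 1) ω)

/-- `f_ε = v_ε Σ_i π_{ε,i} f_{ε,i}`. -/
def fBar {m : ℕ} (π : ℝ → Fin m → ℝ) (f : ℝ → Fin m → ℝ) (v : ℝ → ℝ) (ε : ℝ) : ℝ :=
  v ε * ∑ i, π ε i * f ε i

/-!
Put `F := π ⬝ᵥ f` and `u := f - F`. Since `f ≥ 0`, we have `-F ≤ u`, and this one-sided bound alone
controls the solution `h` of the Poisson equation `h - P h = u` by a multiple of `F`, through the
minimum principle and the uniform irreducibility that condition B provides; no lower bound on the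
stationary weights is needed. The Poisson equation turns `∑ (f (X k) - F)` into a martingale plus a
bounded boundary term, so its second moment after `n` steps is `O((n + 1) F²)`, and
`f_ε⁻¹ κ_ε(t) → t` in `L²`. As `κ_ε` is nondecreasing, convergence in probability at each time
is automatically locally uniform (Pólya), and multiplying by `f_ε` gives (iii) and (iv). Finally the
Laplace transform of `κ_ε(1)` at `s` differs from `exp (-s f_ε)` by `o(1)`, so that one of them
converges if and only if the other does, which is (ii).
-/

section StochasticMatrix

open Matrix

variable {ι : Type*} [Fintype ι] {P : Matrix ι ι ℝ} {π h u : ι → ℝ}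

lemma abs_le_of_dotProduct_eq_zero (hπ : π ∈ stdSimplex ℝ ι) (hπh : π ⬝ᵥ h = 0) {B : ℝ}
    (hB : ∀ i j, h i - h j ≤ B) (i : ι) : |h i| ≤ B := by
  have hmean (c : ℝ) : ∑ j, π j * (c - h j) = c := by
    have : ∑ j, π j * h j = 0 := hπh
    simp only [mul_sub, Finset.sum_sub_distrib, ← Finset.sum_mul, hπ.2, this, one_mul, sub_zero]
  have hupper : ∑ j, π j * (h i - h j) ≤ ∑ j, π j * B :=
    Finset.sum_le_sum fun j _ => mul_le_mul_of_nonneg_left (hB i j) (hπ.1 j)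
  have hlower : ∑ j, π j * (-B) ≤ ∑ j, π j * (h i - h j) :=
    Finset.sum_le_sum fun j _ =>
      mul_le_mul_of_nonneg_left (by linarith [hB j i]) (hπ.1 j)
  rw [hmean, ← Finset.sum_mul, hπ.2, one_mul] at hupper hlower
  exact abs_le.mpr ⟨hlower, hupper⟩

variable [DecidableEq ι]

lemma le_mulVec_of_mem_rowStochastic (hP : P ∈ rowStochastic ℝ ι) {B : ℝ}
    (hB : ∀ i, B ≤ h i) (i : ι) : B ≤ (P *ᵥ h) i :=
  calc B = ∑ j, P i j * B := by
        rw [← Finset.sum_mul, sum_row_of_mem_rowStochastic hP, one_mul]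
    _ ≤ ∑ j, P i j * h j :=
        Finset.sum_le_sum fun j _ =>
          mul_le_mul_of_nonneg_left (hB j) (nonneg_of_mem_rowStochastic hP)

lemma abs_mulVec_le_of_mem_rowStochastic (hP : P ∈ rowStochastic ℝ ι) {B : ℝ}
    (hB : ∀ i, |h i| ≤ B) (i : ι) : |(P *ᵥ h) i| ≤ B := by
  have hlower := le_mulVec_of_mem_rowStochastic hP (fun j => neg_le_of_abs_le (hB j)) i
  have hupper := le_mulVec_of_mem_rowStochastic hP (h := -h)
    (fun j => neg_le_neg (le_of_abs_le (hB j))) i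
  rw [mulVec_neg, Pi.neg_apply, neg_le_neg_iff] at hupper
  exact abs_le.mpr ⟨hlower, hupper⟩

lemma mul_apply_sub_le_mulVec_sub (hP : P ∈ rowStochastic ℝ ι) {B : ℝ}
    (hB : ∀ i, B ≤ h i) (i j : ι) : P i j * (h j - B) ≤ (P *ᵥ h) i - B :=
  calc P i j * (h j - B) ≤ ∑ k, P i k * (h k - B) :=
        Finset.single_le_sum (f := fun k => P i k * (h k - B))
          (fun k _ => mul_nonneg (nonneg_of_mem_rowStochastic hP) (sub_nonneg.mpr (hB k)))
          (Finset.mem_univ j)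
    _ = (P *ᵥ h) i - B := by
        simp only [mul_sub, Finset.sum_sub_distrib, ← Finset.sum_mul,
          sum_row_of_mem_rowStochastic hP, one_mul, mulVec, dotProduct]

/-- Quantitative irreducibility: any state is reached from any other at some time `r ≤ K`
with `r`-step transition probability at least `b`. -/
def UniformlyIrreducible (P : Matrix ι ι ℝ) (K : ℕ) (b : ℝ) : Prop :=
  ∀ i j, ∃ r ≤ K, b ≤ (P ^ r) i j

/-- `h` solves the Poisson equation `h - P h = u` of the transition matrix `P` with
right-hand side `u`. -/
def IsPoissonSolution (P : Matrix ι ι ℝ) (u h : ι → ℝ) : Prop :=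
  h = u + P *ᵥ h

lemma IsPoissonSolution.mulVec_pow_sub_le (hP : P ∈ rowStochastic ℝ ι)
    (hh : IsPoissonSolution P u h) {U : ℝ} (hu : ∀ i, -U ≤ u i) (r : ℕ) (i : ι) :
    ((P ^ r) *ᵥ h) i - h i ≤ r * U := by
  induction r with
  | zero => simp
  | succ r ih =>
    have hstep : (P ^ r) *ᵥ h = (P ^ r) *ᵥ u + (P ^ (r + 1)) *ᵥ h := by
      conv_lhs => rw [hh, mulVec_add, mulVec_mulVec, ← pow_succ]
    have hur := le_mulVec_of_mem_rowStochastic (pow_mem hP r) hu i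
    have := congrFun hstep i
    simp only [Pi.add_apply] at this
    push_cast
    linarith

-- Start at a minimiser `k` of `h` and iterate the equation until `i` is charged:
-- `b * (h i - h k) ≤ (P ^ r h) k - h k ≤ r * U`.
lemma IsPoissonSolution.sub_le (hP : P ∈ rowStochastic ℝ ι) {K : ℕ} {b : ℝ} (hb : 0 < b)
    (hirr : UniformlyIrreducible P K b) (hh : IsPoissonSolution P u h) {U : ℝ} (hU : 0 ≤ U)
    (hu : ∀ i, -U ≤ u i) (i j : ι) : h i - h j ≤ K / b * U := by
  obtain ⟨k, -, hk⟩ := Finset.exists_min_image Finset.univ h ⟨i, Finset.mem_univ i⟩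
  have hmin : ∀ l, h k ≤ h l := fun l => hk l (Finset.mem_univ l)
  obtain ⟨r, hrK, hr⟩ := hirr k i
  have hkey : b * (h i - h k) ≤ K * U :=
    calc b * (h i - h k) ≤ (P ^ r) k i * (h i - h k) :=
          mul_le_mul_of_nonneg_right hr (sub_nonneg.mpr (hmin i))
      _ ≤ ((P ^ r) *ᵥ h) k - h k := mul_apply_sub_le_mulVec_sub (pow_mem hP r) hmin k i
      _ ≤ r * U := hh.mulVec_pow_sub_le hP hu r k
      _ ≤ K * U := by gcongr
  calc h i - h j ≤ h i - h k := by linarith [hmin j]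
    _ ≤ K / b * U := by rwa [div_mul_eq_mul_div, le_div_iff₀' hb]

/-- The Kemeny–Snell matrix `1 - P + Π`, where every row of `Π` is `π`, whose inverse is the
fundamental matrix of the chain; inverting it solves the Poisson equation under the normalisation
`π h = 0`. -/
def kemenySnellMatrix (P : Matrix ι ι ℝ) (π : ι → ℝ) : Matrix ι ι ℝ :=
  1 - P + replicateRow ι π

lemma kemenySnellMatrix_mulVec :
    kemenySnellMatrix P π *ᵥ h = h - P *ᵥ h + fun _ => π ⬝ᵥ h := by
  rw [kemenySnellMatrix, add_mulVec, sub_mulVec, one_mulVec]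
  rfl

lemma dotProduct_kemenySnellMatrix_mulVec (hπ : π ∈ stdSimplex ℝ ι) (hπP : π ᵥ* P = π) :
    π ⬝ᵥ (kemenySnellMatrix P π *ᵥ h) = π ⬝ᵥ h := by
  have hconst (c : ℝ) : π ⬝ᵥ (fun _ => c) = c := by
    rw [dotProduct, ← Finset.sum_mul, hπ.2, one_mul]
  rw [kemenySnellMatrix_mulVec, dotProduct_add, dotProduct_sub, dotProduct_mulVec, hπP, hconst,
    sub_self, zero_add]

lemma isPoissonSolution_of_kemenySnellMatrix_mulVec_eq (hπ : π ∈ stdSimplex ℝ ι)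
    (hπP : π ᵥ* P = π) (hπu : π ⬝ᵥ u = 0) (hh : kemenySnellMatrix P π *ᵥ h = u) :
    IsPoissonSolution P u h ∧ π ⬝ᵥ h = 0 := by
  have hπh : π ⬝ᵥ h = 0 := by
    rw [← dotProduct_kemenySnellMatrix_mulVec hπ hπP, hh, hπu]
  refine ⟨funext fun i => ?_, hπh⟩
  have := congrFun hh i
  simp only [kemenySnellMatrix_mulVec, hπh, Pi.add_apply, Pi.sub_apply] at this
  rw [Pi.add_apply]
  linarith

variable {K : ℕ} {b : ℝ}

lemma isUnit_kemenySnellMatrix (hP : P ∈ rowStochastic ℝ ι) (hb : 0 < b)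
    (hirr : UniformlyIrreducible P K b) (hπ : π ∈ stdSimplex ℝ ι) (hπP : π ᵥ* P = π) :
    IsUnit (kemenySnellMatrix P π) := by
  rw [← mulVec_injective_iff_isUnit, ← coe_mulVecLin, injective_iff_map_eq_zero]
  intro h hh
  obtain ⟨hsol, hπh⟩ :=
    isPoissonSolution_of_kemenySnellMatrix_mulVec_eq hπ hπP (dotProduct_zero π) hh
  have hosc (i j : ι) : h i - h j ≤ 0 := by
    simpa using hsol.sub_le hP hb hirr le_rfl (by simp) i j
  exact funext fun i => abs_nonpos_iff.mp (abs_le_of_dotProduct_eq_zero hπ hπh hosc i)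

lemma exists_isPoissonSolution_abs_le (hP : P ∈ rowStochastic ℝ ι) (hb : 0 < b)
    (hirr : UniformlyIrreducible P K b) (hπ : π ∈ stdSimplex ℝ ι) (hπP : π ᵥ* P = π)
    (hπu : π ⬝ᵥ u = 0) {U : ℝ} (hU : 0 ≤ U) (hu : ∀ i, -U ≤ u i) :
    ∃ h, IsPoissonSolution P u h ∧ ∀ i, |h i| ≤ K / b * U := by
  obtain ⟨h, hh⟩ :=
    mulVec_surjective_iff_isUnit.mpr (isUnit_kemenySnellMatrix hP hb hirr hπ hπP) u
  obtain ⟨hsol, hπh⟩ := isPoissonSolution_of_kemenySnellMatrix_mulVec_eq hπ hπP hπu hh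
  exact ⟨h, hsol, abs_le_of_dotProduct_eq_zero hπ hπh (hsol.sub_le hP hb hirr hU hu)⟩

end StochasticMatrix

section Path

variable {ι : Type*}

/-- The product of the transition probabilities along the first `n` steps of the path `x`. -/
def pathWeight (P : Matrix ι ι ℝ) (n : ℕ) (x : ℕ → ι) : ℝ :=
  ∏ k ∈ Finset.range n, P (x k) (x (k + 1))

/-- The path that starts at `i` and then follows `x`. -/
def consPath (i : ι) (x : ℕ → ι) : ℕ → ι
  | 0 => i
  | k + 1 => x k

lemma pathWeight_consPath (P : Matrix ι ι ℝ) (n : ℕ) (i : ι) (x : ℕ → ι) :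
    pathWeight P (n + 1) (consPath i x) = P i (x 0) * pathWeight P n x := by
  rw [pathWeight, Finset.prod_range_succ', mul_comm]
  rfl

end Path

section MarkovChain

variable {ι Ω : Type*} [MeasurableSpace ι] [MeasurableSpace Ω] {X : ℕ → Ω → ι} {P : Matrix ι ι ℝ}

/-- `X` is, under `μ`, a homogeneous Markov chain with transition matrix `P`; the initial
distribution is arbitrary. -/
structure IsMarkovChain (μ : Measure Ω) (X : ℕ → Ω → ι) (P : Matrix ι ι ℝ) : Prop where
  measurable : ∀ n, Measurable (X n)
  measureReal_path_succ : ∀ n (x : ℕ → ι),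
    μ.real {ω | ∀ k ≤ n + 1, X k ω = x k} = μ.real {ω | ∀ k ≤ n, X k ω = x k} * P (x n) (x (n + 1))

lemma IsMarkovChain.sum_smul {κ : Type*} [Fintype κ] {ν : κ → Measure Ω}
    [∀ i, IsFiniteMeasure (ν i)] {c : κ → ℝ≥0∞} (hc : ∀ i, c i ≠ ∞)
    (hX : ∀ n, Measurable (X n)) (hν : ∀ i, IsMarkovChain (ν i) X P) :
    IsMarkovChain (∑ i, c i • ν i) X P where
  measurable := hX
  measureReal_path_succ n x := by
    have hreal (s : Set Ω) : (∑ i, c i • ν i).real s = ∑ i, (c i).toReal * (ν i).real s := by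
      simp only [measureReal_def, Measure.finsetSum_apply, Measure.smul_apply, smul_eq_mul]
      rw [ENNReal.toReal_sum fun i _ => ENNReal.mul_ne_top (hc i) (measure_ne_top _ _)]
      simp only [ENNReal.toReal_mul]
    simp only [hreal, (hν _).measureReal_path_succ, Finset.sum_mul, mul_assoc]

/-- A homogeneous Markov chain given by its laws `ν i` started from the individual states,
which prescribe the path probabilities. Since `ENNReal.ofReal` truncates at zero, this does not
by itself force the entries of `P` to be nonnegative. -/
structure IsMarkovFamily (ν : ι → Measure Ω) (X : ℕ → Ω → ι) (P : Matrix ι ι ℝ) : Prop where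
  isProbabilityMeasure : ∀ i, IsProbabilityMeasure (ν i)
  measurable : ∀ n, Measurable (X n)
  measure_path : ∀ n (x : ℕ → ι),
    ν (x 0) {ω | ∀ k ≤ n, X k ω = x k} = ENNReal.ofReal (pathWeight P n x)

namespace IsMarkovFamily

variable {ν : ι → Measure Ω} {i j k : ι}

lemma of_measure_eq_prod_Icc [∀ i, IsProbabilityMeasure (ν i)] (hX : ∀ n, Measurable (X n))
    (h : ∀ n (x : ℕ → ι), ν (x 0) {ω | ∀ k ≤ n, X k ω = x k} =
      ENNReal.ofReal (∏ k ∈ Finset.Icc 1 n, P (x (k - 1)) (x k))) : IsMarkovFamily ν X P where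
  isProbabilityMeasure := inferInstance
  measurable := hX
  measure_path n x := by
    rw [h, pathWeight, ← Finset.Ico_add_one_right_eq_Icc, Finset.prod_Ico_eq_prod_range]
    simp only [add_tsub_cancel_right, add_comm 1]

lemma ae_zero_eq [MeasurableSingletonClass ι] (h : IsMarkovFamily ν X P) (i : ι) :
    ∀ᵐ ω ∂ν i, X 0 ω = i := by
  have := h.isProbabilityMeasure i
  have hone : ν i {ω | X 0 ω = i} = 1 := by
    simpa [pathWeight] using h.measure_path 0 fun _ => i
  exact (prob_compl_eq_zero_iff (h.measurable 0 (measurableSet_singleton i))).mpr hone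

lemma measure_consPath (h : IsMarkovFamily ν X P) (n : ℕ) (i : ι) (x : ℕ → ι) :
    ν i {ω | ∀ k ≤ n + 1, X k ω = consPath i x k} =
      ENNReal.ofReal (P i (x 0) * pathWeight P n x) := by
  rw [← pathWeight_consPath]
  exact h.measure_path (n + 1) (consPath i x)

-- A negative entry `P i j` makes every path through the transition `i → j` null.
lemma pathWeight_nonneg_of_neg (h : IsMarkovFamily ν X P) (hij : P i j < 0) (n : ℕ) {x : ℕ → ι}
    (hx : x 0 = j) : 0 ≤ pathWeight P n x := by
  subst hx
  have hfirst : ν i {ω | ∀ k ≤ 0 + 1, X k ω = consPath i x k} = 0 := by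
    rw [h.measure_consPath, ENNReal.ofReal_eq_zero]
    simpa [pathWeight] using hij.le
  have hpath : ν i {ω | ∀ k ≤ n + 1, X k ω = consPath i x k} = 0 :=
    measure_mono_null (ofPred_subset_ofPred.mpr fun ω hω k hk => hω k (by omega)) hfirst
  rw [h.measure_consPath, ENNReal.ofReal_eq_zero] at hpath
  exact nonneg_of_mul_nonpos_right hpath hij

lemma nonneg_of_reflTransGen (h : IsMarkovFamily ν X P)
    (hji : Relation.ReflTransGen (fun k l => 0 < P k l) j i) : 0 ≤ P i j := by
  by_contra! hij
  have hweight : ∀ n (x : ℕ → ι), x 0 = i → 0 ≤ pathWeight P n x := by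
    have hfrom_j : ∀ n (x : ℕ → ι), x 0 = j → 0 ≤ pathWeight P n x :=
      fun n x hx => h.pathWeight_nonneg_of_neg hij n hx
    clear hij
    induction hji with
    | refl => exact hfrom_j
    | @tail k l _ hkl ih =>
      rintro n x rfl
      have := ih (n + 1) (consPath k x) rfl
      rw [pathWeight_consPath] at this
      exact nonneg_of_mul_nonneg_right this hkl
  have := hweight (0 + 1) (consPath i fun _ => j) rfl
  rw [pathWeight_consPath, pathWeight, Finset.prod_range_zero, mul_one] at this
  exact this.not_gt hij

lemma mem_rowStochastic [Fintype ι] [DecidableEq ι] [MeasurableSingletonClass ι]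
    (h : IsMarkovFamily ν X P)
    (hirr : ∀ i j, Relation.ReflTransGen (fun k l => 0 < P k l) i j) :
    P ∈ Matrix.rowStochastic ℝ ι := by
  refine Matrix.mem_rowStochastic_iff_sum.mpr
    ⟨fun i j => h.nonneg_of_reflTransGen (hirr j i), fun i => ?_⟩
  have := h.isProbabilityMeasure i
  have hstep (j : ι) : (ν i).real (X 1 ⁻¹' {j}) = P i j := by
    have hcons := h.measure_consPath 0 i fun _ => j
    rw [pathWeight, Finset.prod_range_zero, mul_one] at hcons
    rw [measureReal_def, ← ENNReal.toReal_ofReal (h.nonneg_of_reflTransGen (hirr j i)), ← hcons]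
    congr 1
    refine measure_congr (eventuallyEq_set.mpr ?_)
    filter_upwards [h.ae_zero_eq i] with ω hω
    simp [Nat.le_one_iff_eq_zero_or_eq_one, or_imp, forall_and, consPath, hω]
  simp only [← hstep]
  rw [sum_measureReal_preimage_singleton _ fun j _ => h.measurable 1 (measurableSet_singleton j)]
  simp

lemma isMarkovChain [MeasurableSingletonClass ι] (h : IsMarkovFamily ν X P)
    (hP : ∀ i j, 0 ≤ P i j) (i : ι) : IsMarkovChain (ν i) X P where
  measurable := h.measurable
  measureReal_path_succ n x := by
    rcases eq_or_ne (x 0) i with rfl | hne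
    · have hweight (n : ℕ) : 0 ≤ pathWeight P n x := Finset.prod_nonneg fun k _ => hP _ _
      simp only [measureReal_def, h.measure_path, ENNReal.toReal_ofReal (hweight _)]
      exact Finset.prod_range_succ _ _
    · have hnull (n : ℕ) : (ν i).real {ω | ∀ k ≤ n, X k ω = x k} = 0 := by
        rw [measureReal_def, measure_eq_zero_iff_ae_notMem.mpr, ENNReal.toReal_zero]
        filter_upwards [h.ae_zero_eq i] with ω hω hmem
        exact hne ((hmem 0 n.zero_le).symm.trans hω)
      rw [hnull, hnull, zero_mul]

lemma isMarkovChain_sum_smul [Fintype ι] [MeasurableSingletonClass ι] (h : IsMarkovFamily ν X P)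
    (hP : ∀ i j, 0 ≤ P i j) (q : ι → ℝ) :
    IsMarkovChain (∑ i, ENNReal.ofReal (q i) • ν i) X P :=
  have := h.isProbabilityMeasure
  .sum_smul (fun _ => ENNReal.ofReal_ne_top) h.measurable (h.isMarkovChain hP)

lemma isProbabilityMeasure_sum_smul [Fintype ι] (h : IsMarkovFamily ν X P) {q : ι → ℝ}
    (hq : q ∈ stdSimplex ℝ ι) : IsProbabilityMeasure (∑ i, ENNReal.ofReal (q i) • ν i) := by
  have := h.isProbabilityMeasure
  refine ⟨?_⟩
  simp [Measure.finsetSum_apply, ← ENNReal.ofReal_sum_of_nonneg fun i _ => hq.1 i, hq.2]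

end IsMarkovFamily

end MarkovChain

section SecondMoment

variable {Ω : Type*} [MeasurableSpace Ω] {μ : Measure Ω} [IsProbabilityMeasure μ] {Z M : Ω → ℝ}

lemma sq_integral_abs_le_integral_sq (hZ : Integrable Z μ)
    (hZ' : Integrable (fun ω => Z ω ^ 2) μ) : (∫ ω, |Z ω| ∂μ) ^ 2 ≤ ∫ ω, Z ω ^ 2 ∂μ := by
  simpa only [Function.comp_def, sq_abs] using
    even_two.convexOn_pow.map_integral_le (continuous_pow 2).continuousOn isClosed_univ
      (ae_of_all _ fun _ => mem_univ _) hZ.abs (by simpa only [Function.comp_def, sq_abs] using hZ')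

lemma integral_sq_le_of_abs_sub_le (hM : Integrable (fun ω => M ω ^ 2) μ) {c : ℝ}
    (h : ∀ ω, |Z ω - M ω| ≤ c) : ∫ ω, Z ω ^ 2 ∂μ ≤ 2 * ∫ ω, M ω ^ 2 ∂μ + 2 * c ^ 2 := by
  have hpointwise (ω : Ω) : Z ω ^ 2 ≤ 2 * M ω ^ 2 + 2 * c ^ 2 := by
    have hdiff := sq_le_sq' (neg_le_of_abs_le (h ω)) (le_of_abs_le (h ω))
    have hsum := add_sq_le (a := M ω) (b := Z ω - M ω)
    rw [add_sub_cancel] at hsum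
    linarith
  calc ∫ ω, Z ω ^ 2 ∂μ ≤ ∫ ω, (2 * M ω ^ 2 + 2 * c ^ 2) ∂μ :=
        integral_mono_of_nonneg (ae_of_all _ fun _ => sq_nonneg _)
          ((hM.const_mul 2).add (integrable_const _)) (ae_of_all _ hpointwise)
    _ = 2 * ∫ ω, M ω ^ 2 ∂μ + 2 * c ^ 2 := by
        rw [integral_add (hM.const_mul 2) (integrable_const _), integral_const_mul,
          integral_const, probReal_univ, one_smul]

end SecondMoment

section PathFunctional

variable {ι Ω : Type*} [MeasurableSpace ι] [MeasurableSpace Ω] {μ : Measure Ω} {X : ℕ → Ω → ι}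
  {P : Matrix ι ι ℝ} {F : (ℕ → ι) → ℝ} {n : ℕ}

lemma integrable_comp_path [Finite ι] [MeasurableSingletonClass ι] [IsFiniteMeasure μ]
    (hX : ∀ n, Measurable (X n)) (hF : DependsOn F (Iic n)) :
    Integrable (fun ω => F (X · ω)) μ := by
  obtain ⟨g, rfl⟩ := dependsOn_iff_exists_comp.mp hF
  have hpath : Measurable fun ω (k : Iic n) => X k ω := measurable_pi_lambda _ fun k => hX k
  exact Integrable.of_finite.comp_measurable hpath

lemma IsMarkovChain.measureReal_past_and_next (hX : IsMarkovChain μ X P) (y : Iic n → ι) (j : ι) :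
    μ.real {ω | (∀ k : Iic n, X k ω = y k) ∧ X (n + 1) ω = j} =
      μ.real {ω | ∀ k : Iic n, X k ω = y k} * P (y ⟨n, self_mem_Iic⟩) j := by
  let x : ℕ → ι := fun k => if hk : k ≤ n then y ⟨k, hk⟩ else j
  have hpast (ω : Ω) : (∀ k ≤ n, X k ω = x k) ↔ ∀ k : Iic n, X k ω = y k := by
    simp +contextual [x]
  have hsucc (ω : Ω) : (∀ k ≤ n + 1, X k ω = x k) ↔
      (∀ k ≤ n, X k ω = x k) ∧ X (n + 1) ω = j := by
    simp [Nat.le_succ_iff_eq_or_le, or_imp, forall_and, x, and_comm]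
  have := hX.measureReal_path_succ n x
  simp only [hsucc, hpast] at this
  simpa [x] using this

end PathFunctional

section Martingale

open Matrix

variable {ι Ω : Type*} [Fintype ι] {P : Matrix ι ι ℝ} {f h u : ι → ℝ}

/-- The martingale difference `h(x_{n+1}) - (P h)(x_n)` of the function `h` at time `n`, as a
functional of the path `x`. -/
def martingaleDiff (P : Matrix ι ι ℝ) (h : ι → ℝ) (n : ℕ) (x : ℕ → ι) : ℝ :=
  h (x (n + 1)) - (P *ᵥ h) (x n)

lemma dependsOn_martingaleDiff (P : Matrix ι ι ℝ) (h : ι → ℝ) (n : ℕ) :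
    DependsOn (martingaleDiff P h n) (Iic (n + 1)) := fun x y hxy => by
  rw [martingaleDiff, martingaleDiff, hxy n (mem_Iic.mpr n.le_succ), hxy (n + 1) self_mem_Iic]

lemma dependsOn_sum_martingaleDiff (P : Matrix ι ι ℝ) (h : ι → ℝ) (n : ℕ) :
    DependsOn (fun x => ∑ k ∈ Finset.range n, martingaleDiff P h k x) (Iic n) :=
  fun _ _ hxy => Finset.sum_congr rfl fun k hk =>
    dependsOn_martingaleDiff P h k fun l hl =>
      hxy l (le_trans hl (Nat.succ_le_of_lt (Finset.mem_range.mp hk)))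

lemma IsPoissonSolution.sum_eq (hh : IsPoissonSolution P u h) (n : ℕ) (x : ℕ → ι) :
    ∑ k ∈ Finset.range n, u (x k) =
      ∑ k ∈ Finset.range n, martingaleDiff P h k x + (h (x 0) - h (x n)) := by
  have hstep (k : ℕ) : u (x k) = martingaleDiff P h k x + (h (x k) - h (x (k + 1))) := by
    have := congrFun hh (x k)
    rw [Pi.add_apply] at this
    rw [martingaleDiff]
    linarith
  simp only [hstep, Finset.sum_add_distrib, Finset.sum_range_sub']

lemma abs_martingaleDiff_le [DecidableEq ι] (hP : P ∈ rowStochastic ℝ ι) {A : ℝ}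
    (hA : ∀ i, |h i| ≤ A) (n : ℕ) (x : ℕ → ι) : |martingaleDiff P h n x| ≤ 2 * A := by
  calc |martingaleDiff P h n x| ≤ |h (x (n + 1))| + |(P *ᵥ h) (x n)| := abs_sub _ _
    _ ≤ 2 * A := by linarith [hA (x (n + 1)), abs_mulVec_le_of_mem_rowStochastic hP hA (x n)]

variable [MeasurableSpace ι] [MeasurableSingletonClass ι] [MeasurableSpace Ω] {μ : Measure Ω}
  {X : ℕ → Ω → ι} {F : (ℕ → ι) → ℝ} {n : ℕ}

lemma IsMarkovChain.integral_mul_martingaleDiff [IsFiniteMeasure μ] [DecidableEq ι]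
    (hX : IsMarkovChain μ X P) (hP : P ∈ rowStochastic ℝ ι) (hF : DependsOn F (Iic n)) :
    ∫ ω, F (X · ω) * martingaleDiff P h n (X · ω) ∂μ = 0 := by
  obtain ⟨g, rfl⟩ := dependsOn_iff_exists_comp.mp hF
  let past : Ω → Iic n → ι := fun ω k => X k ω
  let last : Iic n := ⟨n, self_mem_Iic⟩
  have hpast : Measurable past := measurable_pi_lambda past fun k => hX.measurable k
  have hmeas : Measurable fun ω => (past ω, X (n + 1) ω) := hpast.prodMk (hX.measurable (n + 1))
  have hjoint (y : Iic n → ι) (j : ι) :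
      (μ.map fun ω => (past ω, X (n + 1) ω)).real {(y, j)} =
        μ.real {ω | ∀ k, past ω k = y k} * P (y last) j := by
    rw [map_measureReal_apply hmeas (measurableSet_singleton _), ← hX.measureReal_past_and_next]
    congr 1 with ω
    simp [Prod.ext_iff, funext_iff, past]
  have hcenter (i : ι) : ∑ j, P i j * (h j - (P *ᵥ h) i) = 0 := by
    simp only [mul_sub, Finset.sum_sub_distrib, ← Finset.sum_mul,
      sum_row_of_mem_rowStochastic hP, one_mul]
    exact sub_self _
  calc ∫ ω, (g ∘ (Iic n).domRestrict) (X · ω) * martingaleDiff P h n (X · ω) ∂μ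
      = ∫ z, g z.1 * (h z.2 - (P *ᵥ h) (z.1 last)) ∂(μ.map fun ω => (past ω, X (n + 1) ω)) :=
        (integral_map (f := fun z : (Iic n → ι) × ι => g z.1 * (h z.2 - (P *ᵥ h) (z.1 last)))
          hmeas.aemeasurable Measurable.of_discrete.aestronglyMeasurable).symm
    _ = ∑ y, ∑ j, μ.real {ω | ∀ k, past ω k = y k} * P (y last) j *
          (g y * (h j - (P *ᵥ h) (y last))) := by
        rw [integral_fintype Integrable.of_finite, Fintype.sum_prod_type]
        simp only [hjoint, smul_eq_mul]
    _ = ∑ y, μ.real {ω | ∀ k, past ω k = y k} * g y *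
          ∑ j, P (y last) j * (h j - (P *ᵥ h) (y last)) := by
        simp only [Finset.mul_sum]
        exact Finset.sum_congr rfl fun y _ => Finset.sum_congr rfl fun j _ => by ring
    _ = 0 := by simp only [hcenter, mul_zero, Finset.sum_const_zero]

lemma IsMarkovChain.integral_sq_sum_martingaleDiff_le [IsProbabilityMeasure μ] [DecidableEq ι]
    (hX : IsMarkovChain μ X P) (hP : P ∈ rowStochastic ℝ ι) {B : ℝ}
    (hB : ∀ n x, |martingaleDiff P h n x| ≤ B) (n : ℕ) :
    ∫ ω, (∑ k ∈ Finset.range n, martingaleDiff P h k (X · ω)) ^ 2 ∂μ ≤ n * B ^ 2 := by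
  induction n with
  | zero => simp
  | succ n ih =>
    let S : (ℕ → ι) → ℝ := fun x => ∑ k ∈ Finset.range n, martingaleDiff P h k x
    let D : (ℕ → ι) → ℝ := martingaleDiff P h n
    have hS : DependsOn S (Iic n) := dependsOn_sum_martingaleDiff P h n
    have hS' : DependsOn S (Iic (n + 1)) := hS.mono (Iic_subset_Iic.mpr n.le_succ)
    have hD : DependsOn D (Iic (n + 1)) := dependsOn_martingaleDiff P h n
    have hintegrable (G : ℝ → ℝ → ℝ) : Integrable (fun ω => G (S (X · ω)) (D (X · ω))) μ :=
      integrable_comp_path (F := fun x => G (S x) (D x)) hX.measurable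
        fun x y hxy => congrArg₂ G (hS' hxy) (hD hxy)
    have hcross : ∫ ω, S (X · ω) * D (X · ω) ∂μ = 0 := hX.integral_mul_martingaleDiff hP hS
    have hsq : ∫ ω, D (X · ω) ^ 2 ∂μ ≤ B ^ 2 := by
      calc ∫ ω, D (X · ω) ^ 2 ∂μ ≤ ∫ _, B ^ 2 ∂μ :=
            integral_mono (hintegrable fun _ d => d ^ 2) (integrable_const _)
              fun ω => sq_le_sq' (neg_le_of_abs_le (hB n _)) (le_of_abs_le (hB n _))
        _ = B ^ 2 := by simp
    calc ∫ ω, (∑ k ∈ Finset.range (n + 1), martingaleDiff P h k (X · ω)) ^ 2 ∂μ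
        = ∫ ω, (S (X · ω) ^ 2 + 2 * (S (X · ω) * D (X · ω)) + D (X · ω) ^ 2) ∂μ := by
          congr 1 with ω
          rw [Finset.sum_range_succ]
          ring
      _ = ∫ ω, S (X · ω) ^ 2 ∂μ + ∫ ω, D (X · ω) ^ 2 ∂μ := by
          rw [integral_add (hintegrable fun s d => s ^ 2 + 2 * (s * d))
              (hintegrable fun _ d => d ^ 2),
            integral_add (hintegrable fun s _ => s ^ 2) (hintegrable fun s d => 2 * (s * d)),
            integral_const_mul, hcross, mul_zero, add_zero]
      _ ≤ (n + 1 : ℕ) * B ^ 2 := by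
          push_cast
          linarith

lemma IsMarkovChain.integral_sq_sum_sub_le [IsProbabilityMeasure μ] [DecidableEq ι]
    (hX : IsMarkovChain μ X P) (hP : P ∈ rowStochastic ℝ ι) {K : ℕ} {b : ℝ} (hb : 0 < b)
    (hirr : UniformlyIrreducible P K b) {π : ι → ℝ} (hπ : π ∈ stdSimplex ℝ ι)
    (hπP : π ᵥ* P = π) (hf : ∀ i, 0 ≤ f i) (n : ℕ) :
    ∫ ω, (∑ k ∈ Finset.range n, (f (X k ω) - π ⬝ᵥ f)) ^ 2 ∂μ ≤
      8 * (n + 1) * (K / b * (π ⬝ᵥ f)) ^ 2 := by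
  have hmean : 0 ≤ π ⬝ᵥ f := Finset.sum_nonneg fun i _ => mul_nonneg (hπ.1 i) (hf i)
  have hcentered : π ⬝ᵥ (fun i => f i - π ⬝ᵥ f) = 0 := by
    simp only [dotProduct, mul_sub, Finset.sum_sub_distrib, ← Finset.sum_mul, hπ.2, one_mul,
      sub_self]
  obtain ⟨h, hh, hA⟩ := exists_isPoissonSolution_abs_le hP hb hirr hπ hπP hcentered hmean
    fun i => by linarith [hf i]
  set A := K / b * (π ⬝ᵥ f)
  let M : (ℕ → ι) → ℝ := fun x => ∑ k ∈ Finset.range n, martingaleDiff P h k x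
  have hM : ∫ ω, M (X · ω) ^ 2 ∂μ ≤ n * (2 * A) ^ 2 :=
    hX.integral_sq_sum_martingaleDiff_le hP (abs_martingaleDiff_le hP hA) n
  have hMint : Integrable (fun ω => M (X · ω) ^ 2) μ :=
    integrable_comp_path (F := fun x => M x ^ 2) hX.measurable fun x y hxy =>
      congrArg (· ^ 2) (dependsOn_sum_martingaleDiff P h n hxy)
  have hboundary (x : ℕ → ι) :
      |∑ k ∈ Finset.range n, (f (x k) - π ⬝ᵥ f) - M x| ≤ 2 * A := by
    rw [hh.sum_eq n x, add_sub_cancel_left]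
    linarith [abs_sub (h (x 0)) (h (x n)), hA (x 0), hA (x n)]
  calc ∫ ω, (∑ k ∈ Finset.range n, (f (X k ω) - π ⬝ᵥ f)) ^ 2 ∂μ
      ≤ 2 * ∫ ω, M (X · ω) ^ 2 ∂μ + 2 * (2 * A) ^ 2 :=
        integral_sq_le_of_abs_sub_le hMint fun ω => hboundary (X · ω)
    _ ≤ 8 * (n + 1) * A ^ 2 := by linarith

end Martingale

section HighProbability

variable {E Ω : Type*} [MeasurableSpace Ω] {μ : E → Measure Ω} {l : Filter E}

/-- The filter of the events that occur with high probability: a set `S` of pairs `(ε, ω)` belongs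
to it when the `μ ε`-probability that `(ε, ω) ∉ S` tends to zero along `l`. Convergence along this
filter is convergence in probability under the varying laws `μ ε`. -/
def highProbability (μ : E → Measure Ω) (l : Filter E) : Filter (E × Ω) where
  sets := {S | Tendsto (fun ε => μ ε {ω | (ε, ω) ∉ S}) l (𝓝 0)}
  univ_sets := by simpa using tendsto_const_nhds
  sets_of_superset hS hST :=
    tendsto_of_tendsto_of_tendsto_of_le_of_le tendsto_const_nhds hS (fun _ => zero_le)
      fun _ => measure_mono fun _ => mt (@hST _)
  inter_sets {S T} hS hT := by
    have hadd : Tendsto (fun ε => μ ε {ω | (ε, ω) ∉ S} + μ ε {ω | (ε, ω) ∉ T}) l (𝓝 0) := by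
      simpa using Tendsto.add hS hT
    refine tendsto_of_tendsto_of_tendsto_of_le_of_le tendsto_const_nhds hadd (fun _ => zero_le)
      fun ε => (measure_mono fun ω hω => ?_).trans (measure_union_le _ _)
    exact not_and_or.mp hω

lemma eventually_highProbability {p : E × Ω → Prop} :
    (∀ᶠ z in highProbability μ l, p z) ↔ Tendsto (fun ε => μ ε {ω | ¬ p (ε, ω)}) l (𝓝 0) :=
  Iff.rfl

lemma tendsto_fst_highProbability : Tendsto Prod.fst (highProbability μ l) l := by
  intro A hA
  refine eventually_highProbability.mpr (tendsto_const_nhds.congr' ?_)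
  filter_upwards [hA] with ε hε
  simp [hε]

lemma tendsto_toReal_measure_of_eventually_not {p : E × Ω → Prop}
    (h : ∀ᶠ z in highProbability μ l, ¬ p z) :
    Tendsto (fun ε => (μ ε {ω | p (ε, ω)}).toReal) l (𝓝 0) := by
  have := (ENNReal.tendsto_toReal ENNReal.zero_ne_top).comp (eventually_highProbability.mp h)
  simpa only [Function.comp_def, not_not, ENNReal.toReal_zero] using this

lemma tendsto_toReal_measure_lt_abs_sub {Z : E × Ω → ℝ} {c : ℝ}
    (h : Tendsto Z (highProbability μ l) (𝓝 c)) {δ : ℝ} (hδ : 0 < δ) :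
    Tendsto (fun ε => (μ ε {ω | δ < |Z (ε, ω) - c|}).toReal) l (𝓝 0) :=
  tendsto_toReal_measure_of_eventually_not (p := fun z => δ < |Z z - c|) <|
    (Metric.tendsto_nhds.mp h δ hδ).mono fun _ hz => hz.not_gt

lemma tendsto_toReal_measure_exists_lt_abs_sub {Y : E × Ω → ℝ → ℝ} {g : ℝ → ℝ} {T : ℝ}
    (h : TendstoUniformlyOn Y g (highProbability μ l) (Icc 0 T)) {δ : ℝ} (hδ : 0 < δ) :
    Tendsto (fun ε => (μ ε {ω | ∃ t, 0 ≤ t ∧ t ≤ T ∧ δ < |Y (ε, ω) t - g t|}).toReal)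
      l (𝓝 0) := by
  refine tendsto_toReal_measure_of_eventually_not
    (p := fun z => ∃ t, 0 ≤ t ∧ t ≤ T ∧ δ < |Y z t - g t|) ?_
  filter_upwards [Metric.tendstoUniformlyOn_iff.mp h δ hδ] with z hz
  rintro ⟨t, ht₀, htT, ht⟩
  have := hz t ⟨ht₀, htT⟩
  rw [dist_comm, Real.dist_eq] at this
  exact this.not_gt ht

lemma tendsto_highProbability_of_tendsto_integral_abs {Z : E → Ω → ℝ}
    (hint : ∀ᶠ ε in l, Integrable (Z ε) (μ ε))
    (h : Tendsto (fun ε => ∫ ω, |Z ε ω| ∂μ ε) l (𝓝 0)) :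
    Tendsto (fun z : E × Ω => Z z.1 z.2) (highProbability μ l) (𝓝 0) := by
  refine Metric.tendsto_nhds.mpr fun δ hδ => eventually_highProbability.mpr ?_
  have hbound : Tendsto (fun ε => ENNReal.ofReal ((∫ ω, |Z ε ω| ∂μ ε) / δ)) l (𝓝 0) := by
    simpa using ENNReal.tendsto_ofReal (h.div_const δ)
  refine tendsto_of_tendsto_of_tendsto_of_le_of_le' tendsto_const_nhds hbound
    (Eventually.of_forall fun _ => zero_le) ?_
  filter_upwards [hint] with ε hε
  have hmarkov := meas_ge_le_lintegral_div (μ := μ ε) (f := fun ω => ENNReal.ofReal |Z ε ω|)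
    hε.abs.aemeasurable.ennreal_ofReal (ENNReal.ofReal_pos.mpr hδ).ne' ENNReal.ofReal_ne_top
  rw [← ofReal_integral_eq_lintegral_ofReal hε.abs (ae_of_all _ fun _ => abs_nonneg _),
    ← ENNReal.ofReal_div_of_pos hδ] at hmarkov
  refine (measure_mono fun ω hω => ?_).trans hmarkov
  exact ENNReal.ofReal_le_ofReal (by simpa using hω)

end HighProbability

section RealAnalysis

-- Pólya's argument: near `t`, monotonicity traps `F z` between its values at two fixed points.
lemma tendstoUniformlyOn_Icc_of_monotoneOn {α : Type*} {l : Filter α} {F : α → ℝ → ℝ} {g : ℝ → ℝ}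
    {a b : ℝ} (hF : ∀ᶠ z in l, MonotoneOn (F z) (Icc a b)) (hg : ContinuousOn g (Icc a b))
    (h : ∀ t ∈ Icc a b, Tendsto (F · t) l (𝓝 (g t))) : TendstoUniformlyOn F g l (Icc a b) := by
  rw [← tendstoLocallyUniformlyOn_iff_tendstoUniformlyOn_of_compact isCompact_Icc,
    Metric.tendstoLocallyUniformlyOn_iff]
  intro δ hδ t ht
  obtain ⟨r, hr, hgr⟩ := Metric.continuousOn_iff.mp hg t ht (δ / 4) (by linarith)
  set c := max a (t - r / 2)
  set d := min b (t + r / 2)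
  have hct : c ≤ t := max_le ht.1 (by linarith)
  have htd : t ≤ d := le_min ht.2 (by linarith)
  have hsub : Icc c d ⊆ Icc a b := Icc_subset_Icc (le_max_left _ _) (min_le_left _ _)
  have hosc : ∀ y ∈ Icc c d, |g y - g t| < δ / 4 := fun y hy => by
    refine hgr y (hsub hy) ?_
    have hlower := (le_max_right a (t - r / 2)).trans hy.1
    have hupper := hy.2.trans (min_le_right b (t + r / 2))
    exact abs_lt.mpr ⟨by linarith, by linarith⟩
  have hnhds : Icc c d ∈ 𝓝[Icc a b] t := by
    have := inter_mem_nhdsWithin (Icc a b) (Icc_mem_nhds (a := t - r / 2) (b := t + r / 2)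
      (by linarith : t - r / 2 < t) (by linarith))
    rwa [Icc_inter_Icc] at this
  have hc : c ∈ Icc c d := ⟨le_rfl, hct.trans htd⟩
  have hd : d ∈ Icc c d := ⟨hct.trans htd, le_rfl⟩
  refine ⟨Icc c d, hnhds, ?_⟩
  filter_upwards [hF, Metric.tendsto_nhds.mp (h c (hsub hc)) (δ / 4) (by linarith),
    Metric.tendsto_nhds.mp (h d (hsub hd)) (δ / 4) (by linarith)] with z hmono hzc hzd y hy
  have hcy := hmono (hsub hc) (hsub hy) hy.1
  have hyd := hmono (hsub hy) (hsub hd) hy.2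
  have := abs_lt.mp (hosc c hc)
  have := abs_lt.mp (hosc d hd)
  have := abs_lt.mp (hosc y hy)
  have := abs_lt.mp hzc
  have := abs_lt.mp hzd
  exact abs_lt.mpr ⟨by linarith, by linarith⟩

lemma exp_neg_sub_exp_neg_le (x y : ℝ) :
    Real.exp (-x) - Real.exp (-y) ≤ (y - x) * Real.exp (-x) := by
  have hsplit : Real.exp (-y) = Real.exp (x - y) * Real.exp (-x) := by
    rw [← Real.exp_add]
    ring_nf
  nlinarith [Real.add_one_le_exp (x - y), Real.exp_pos (-x)]

lemma abs_exp_neg_mul_sub_exp_neg_le {a y : ℝ} (ha : 0 ≤ a) (hy : 0 ≤ y) :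
    |Real.exp (-(a * y)) - Real.exp (-a)| ≤ 2 * |y - 1| := by
  rcases le_total y (1 / 2) with hy' | hy'
  · have hle_one : ∀ z ≥ 0, Real.exp (-(a * z)) ≤ 1 := fun z hz =>
      Real.exp_le_one_iff.mpr (neg_nonpos.mpr (mul_nonneg ha hz))
    have := hle_one y hy
    have := hle_one 1 zero_le_one
    rw [mul_one] at this
    rw [abs_of_nonpos (by linarith : y - 1 ≤ 0), abs_le]
    constructor <;> linarith [Real.exp_pos (-(a * y)), Real.exp_pos (-a)]
  · have hdecay : ∀ z ≥ 1 / 2, a * Real.exp (-(a * z)) ≤ 2 := fun z hz => by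
      rw [Real.exp_neg, ← div_eq_mul_inv, div_le_iff₀ (Real.exp_pos _)]
      nlinarith [Real.add_one_le_exp (a * z)]
    have hle (z w : ℝ) (hz : 1 / 2 ≤ z) :
        Real.exp (-(a * z)) - Real.exp (-(a * w)) ≤ 2 * |z - w| :=
      calc Real.exp (-(a * z)) - Real.exp (-(a * w))
          ≤ (a * w - a * z) * Real.exp (-(a * z)) := exp_neg_sub_exp_neg_le _ _
        _ = (w - z) * (a * Real.exp (-(a * z))) := by ring
        _ ≤ |z - w| * 2 := mul_le_mul (by rw [abs_sub_comm]; exact le_abs_self _) (hdecay z hz)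
            (by positivity) (abs_nonneg _)
        _ = 2 * |z - w| := mul_comm _ _
    have hupper := hle y 1 hy'
    have hlower := hle 1 y (by norm_num)
    rw [mul_one] at hupper hlower
    rw [abs_sub_comm 1] at hlower
    exact abs_sub_le_iff.mpr ⟨hupper, hlower⟩

end RealAnalysis

section UniformReachability

open Matrix Relation

lemma exists_pos_eventually_le_of_liminf_pos {E : Type*} {l : Filter E} {u : E → ℝ}
    (h : 0 < liminf u l) : ∃ a > 0, ∀ᶠ ε in l, a ≤ u ε := by
  by_contra! hnone
  rw [liminf_eq] at h
  exact h.not_ge (Real.sSup_nonpos fun a ha => not_lt.mp fun hpos =>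
    hnone a hpos (Eventually.mono ha fun _ => not_lt.mpr))

variable {E ι : Type*} {l : Filter E} {P : E → Matrix ι ι ℝ} {i j : ι}

/-- The transition `i → j` has probability bounded away from zero along `l`. -/
def IsUniformTransition (P : E → Matrix ι ι ℝ) (l : Filter E) (i j : ι) : Prop :=
  ∃ a > 0, ∀ᶠ ε in l, a ≤ P ε i j

/-- Any state is reached from any other through transitions whose probabilities are bounded away
from zero along `l`. -/
def IsUniformlyConnected (P : E → Matrix ι ι ℝ) (l : Filter E) : Prop :=
  ∀ i j, ReflTransGen (IsUniformTransition P l) i j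

lemma IsUniformlyConnected.eventually_reflTransGen [Finite ι] (h : IsUniformlyConnected P l) :
    ∀ᶠ ε in l, ∀ i j, ReflTransGen (fun k l => 0 < P ε k l) i j := by
  have hpos : ∀ᶠ ε in l, ∀ i j, IsUniformTransition P l i j → 0 < P ε i j := by
    simp only [eventually_all]
    rintro i j ⟨a, ha, hP⟩
    exact hP.mono fun ε => ha.trans_le
  exact hpos.mono fun ε hε i j => ReflTransGen.mono hε _ _ (h i j)

lemma exists_pow_apply_ge_of_reflTransGen [Fintype ι] [DecidableEq ι]
    (hP : ∀ᶠ ε in l, P ε ∈ rowStochastic ℝ ι) (hij : ReflTransGen (IsUniformTransition P l) i j) :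
    ∃ r : ℕ, ∃ b > 0, ∀ᶠ ε in l, b ≤ (P ε ^ r) i j := by
  induction hij with
  | refl => exact ⟨0, 1, one_pos, by simp⟩
  | @tail j k _ hjk ih =>
    obtain ⟨r, b, hb, hr⟩ := ih
    obtain ⟨a, ha, hstep⟩ := hjk
    refine ⟨r + 1, b * a, mul_pos hb ha, ?_⟩
    filter_upwards [hP, hr, hstep] with ε hPε hrε hstepε
    calc b * a ≤ (P ε ^ r) i j * P ε j k := mul_le_mul hrε hstepε ha.le (hb.le.trans hrε)
      _ ≤ ∑ k', (P ε ^ r) i k' * P ε k' k :=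
          Finset.single_le_sum (f := fun k' => (P ε ^ r) i k' * P ε k' k)
            (fun k' _ => mul_nonneg (nonneg_of_mem_rowStochastic (pow_mem hPε r))
              (nonneg_of_mem_rowStochastic hPε)) (Finset.mem_univ j)
      _ = (P ε ^ (r + 1)) i k := by rw [pow_succ, mul_apply]

lemma IsUniformlyConnected.exists_eventually_uniformlyIrreducible [Fintype ι] [DecidableEq ι]
    (h : IsUniformlyConnected P l) (hP : ∀ᶠ ε in l, P ε ∈ rowStochastic ℝ ι) :
    ∃ K b, 0 < b ∧ ∀ᶠ ε in l, UniformlyIrreducible (P ε) K b := by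
  choose r b hb hr using fun i j => exists_pow_apply_ge_of_reflTransGen hP (h i j)
  obtain ⟨K, hK⟩ : ∃ K, ∀ i j, r i j ≤ K :=
    (eventually_all.mpr fun i => eventually_all.mpr fun j => eventually_ge_atTop (r i j)).exists
  obtain ⟨c, hc, hcb⟩ : ∃ c > 0, ∀ i j, c ≤ b i j :=
    ((eventually_mem_nhdsWithin (a := (0 : ℝ)) (s := Ioi 0)).and <| eventually_all.mpr fun i =>
      eventually_all.mpr fun j =>
        mem_of_superset (Ioc_mem_nhdsGT (hb i j)) fun _ => And.right).exists
  refine ⟨K, c, hc, ?_⟩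
  simp only [UniformlyIrreducible, eventually_all]
  exact fun i j => (hr i j).mono fun ε hε => ⟨r i j, hK i j, (hcb i j).trans hε⟩

lemma CondB.isUniformlyConnected {m : ℕ} {p : ℝ → Matrix (Fin m) (Fin m) ℝ} (hB : CondB p) :
    IsUniformlyConnected p (𝓝[>] 0) := by
  obtain ⟨N, -, c, hclosed, hcover, hpos⟩ := hB
  have hsegment {a b : ℕ} (hab : a ≤ b) (hbN : b ≤ N) :
      ReflTransGen (IsUniformTransition p (𝓝[>] 0)) (c a) (c b) := by
    induction hab with
    | refl => exact .refl
    | @step b _ ih =>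
      exact (ih (by omega)).tail (exists_pos_eventually_le_of_liminf_pos (hpos b hbN))
  intro i j
  obtain ⟨a, ha, rfl⟩ := hcover i
  obtain ⟨b, hb, rfl⟩ := hcover j
  have hreturn := hsegment ha le_rfl
  rw [hclosed] at hreturn
  exact hreturn.trans (hsegment b.zero_le hb)

end UniformReachability

section AsymptoticallyLinear

variable {E Ω : Type*} [MeasurableSpace Ω] {μ : E → Measure Ω} {l : Filter E}
  {κ : E → ℝ → Ω → ℝ} {a : E → ℝ} {f₀ : ℝ≥0∞} {c s t T : ℝ}

/-- The nonnegative nondecreasing random functions `κ ε`, divided by their deterministic speed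
`a ε > 0`, converge to the identity in `L¹` at every time. Everything is required only eventually
along `l`. -/
structure IsAsymptoticallyLinear (μ : E → Measure Ω) (l : Filter E) (κ : E → ℝ → Ω → ℝ)
    (a : E → ℝ) : Prop where
  isProbabilityMeasure : ∀ᶠ ε in l, IsProbabilityMeasure (μ ε)
  speed_pos : ∀ᶠ ε in l, 0 < a ε
  nonneg : ∀ᶠ ε in l, ∀ t ω, 0 ≤ κ ε t ω
  monotone : ∀ᶠ ε in l, ∀ ω, Monotone (κ ε · ω)
  integrable : ∀ᶠ ε in l, ∀ t, Integrable (κ ε t) (μ ε)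
  tendsto_integral_abs_sub : ∀ t ≥ 0,
    Tendsto (fun ε => ∫ ω, |(a ε)⁻¹ * κ ε t ω - t| ∂μ ε) l (𝓝 0)

/-- The Laplace transform at `s > 0` of the constant, possibly improper, random variable `f₀`. -/
def constLaplace (f₀ : ℝ≥0∞) (s : ℝ) : ℝ :=
  if f₀ = ⊤ then 0 else Real.exp (-(s * f₀.toReal))

lemma constLaplace_top (s : ℝ) : constLaplace ⊤ s = 0 :=
  if_pos rfl

lemma constLaplace_of_ne_top (hf₀ : f₀ ≠ ⊤) (s : ℝ) :
    constLaplace f₀ s = Real.exp (-(s * f₀.toReal)) :=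
  if_neg hf₀

lemma tendsto_of_tendsto_ofReal {u : E → ℝ} (hu : ∀ᶠ ε in l, 0 < u ε) (hf₀ : f₀ ≠ ⊤)
    (h : Tendsto (fun ε => ENNReal.ofReal (u ε)) l (𝓝 f₀)) : Tendsto u l (𝓝 f₀.toReal) :=
  ((ENNReal.tendsto_toReal hf₀).comp h).congr' <|
    hu.mono fun _ hε => ENNReal.toReal_ofReal hε.le

lemma tendsto_exp_neg_mul_constLaplace {u : E → ℝ} (hu : ∀ᶠ ε in l, 0 < u ε)
    (h : Tendsto (fun ε => ENNReal.ofReal (u ε)) l (𝓝 f₀)) (hs : 0 < s) :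
    Tendsto (fun ε => Real.exp (-(s * u ε))) l (𝓝 (constLaplace f₀ s)) := by
  rcases eq_or_ne f₀ ⊤ with rfl | hf₀
  · rw [ENNReal.tendsto_ofReal_nhds_top] at h
    rw [constLaplace_top]
    exact Real.tendsto_exp_neg_atTop_nhds_zero.comp (h.const_mul_atTop hs)
  · rw [constLaplace_of_ne_top hf₀]
    have hlim : Tendsto u l (𝓝 f₀.toReal) := tendsto_of_tendsto_ofReal hu hf₀ h
    exact (Real.continuous_exp.tendsto _).comp (hlim.const_mul s).neg

lemma exists_tendsto_ofReal_of_tendsto_exp_neg {u : E → ℝ}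
    (h : Tendsto (fun ε => Real.exp (-(u ε))) l (𝓝 c)) :
    ∃ f₀ : ℝ≥0∞, Tendsto (fun ε => ENNReal.ofReal (u ε)) l (𝓝 f₀) := by
  have hlog (ε : E) : -Real.log (Real.exp (-(u ε))) = u ε := by rw [Real.log_exp, neg_neg]
  rcases eq_or_ne c 0 with rfl | hc
  · have hpos : Tendsto (fun ε => Real.exp (-(u ε))) l (𝓝[>] 0) :=
      tendsto_nhdsWithin_iff.mpr ⟨h, Eventually.of_forall fun ε => Real.exp_pos _⟩
    have hu := tendsto_neg_atBot_atTop.comp (Real.tendsto_log_nhdsGT_zero.comp hpos)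
    exact ⟨⊤, ENNReal.tendsto_ofReal_nhds_top.mpr (hu.congr hlog)⟩
  · have hu := ((Real.continuousAt_log hc).tendsto.comp h).neg
    exact ⟨_, ENNReal.tendsto_ofReal (hu.congr hlog)⟩

namespace IsAsymptoticallyLinear

lemma tendsto_inv_mul (h : IsAsymptoticallyLinear μ l κ a) (ht : 0 ≤ t) :
    Tendsto (fun z : E × Ω => (a z.1)⁻¹ * κ z.1 t z.2) (highProbability μ l) (𝓝 t) := by
  have hint : ∀ᶠ ε in l, Integrable (fun ω => (a ε)⁻¹ * κ ε t ω - t) (μ ε) := by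
    filter_upwards [h.isProbabilityMeasure, h.integrable] with ε _ hε
    exact ((hε t).const_mul _).sub (integrable_const t)
  have := tendsto_highProbability_of_tendsto_integral_abs hint (h.tendsto_integral_abs_sub t ht)
  exact tendsto_sub_nhds_zero_iff.mp this

lemma eventually_eq_mul (h : IsAsymptoticallyLinear μ l κ a) :
    (fun z : E × Ω => a z.1 * ((a z.1)⁻¹ * κ z.1 t z.2)) =ᶠ[highProbability μ l]
      fun z => κ z.1 t z.2 := by
  filter_upwards [tendsto_fst_highProbability h.speed_pos] with z hz
  exact mul_inv_cancel_left₀ (ne_of_gt hz) _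

lemma tendsto_mul (h : IsAsymptoticallyLinear μ l κ a) (ha : Tendsto a l (𝓝 c)) (ht : 0 ≤ t) :
    Tendsto (fun z : E × Ω => κ z.1 t z.2) (highProbability μ l) (𝓝 (c * t)) :=
  ((ha.comp tendsto_fst_highProbability).mul (h.tendsto_inv_mul ht)).congr' h.eventually_eq_mul

lemma tendsto_atTop (h : IsAsymptoticallyLinear μ l κ a) (ha : Tendsto a l atTop) (ht : 0 < t) :
    Tendsto (fun z : E × Ω => κ z.1 t z.2) (highProbability μ l) atTop :=
  ((ha.comp tendsto_fst_highProbability).atTop_mul_pos ht (h.tendsto_inv_mul ht.le)).congr'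
    h.eventually_eq_mul

lemma tendstoUniformlyOn_inv_mul (h : IsAsymptoticallyLinear μ l κ a) :
    TendstoUniformlyOn (fun z : E × Ω => fun t => (a z.1)⁻¹ * κ z.1 t z.2) id
      (highProbability μ l) (Icc 0 T) := by
  refine tendstoUniformlyOn_Icc_of_monotoneOn ?_ continuousOn_id fun t ht => h.tendsto_inv_mul ht.1
  filter_upwards [tendsto_fst_highProbability (h.speed_pos.and h.monotone)] with z hz
  exact ((hz.2 z.2).const_mul (inv_nonneg.mpr hz.1.le)).monotoneOn _

lemma tendstoUniformlyOn_mul (h : IsAsymptoticallyLinear μ l κ a) (ha : Tendsto a l (𝓝 c)) :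
    TendstoUniformlyOn (fun z : E × Ω => fun t => κ z.1 t z.2) (c * ·)
      (highProbability μ l) (Icc 0 T) := by
  refine tendstoUniformlyOn_Icc_of_monotoneOn ?_ (continuous_const_mul c).continuousOn
    fun t ht => h.tendsto_mul ha ht.1
  filter_upwards [tendsto_fst_highProbability h.monotone] with z hz
  exact (hz z.2).monotoneOn _

lemma tendsto_dist_integral_exp (h : IsAsymptoticallyLinear μ l κ a) (hs : 0 < s) :
    Tendsto (fun ε => dist (∫ ω, Real.exp (-(s * κ ε 1 ω)) ∂μ ε) (Real.exp (-(s * a ε))))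
      l (𝓝 0) := by
  have hbound := (h.tendsto_integral_abs_sub 1 zero_le_one).const_mul 2
  rw [mul_zero] at hbound
  refine squeeze_zero' (Eventually.of_forall fun _ => dist_nonneg) ?_ hbound
  filter_upwards [h.isProbabilityMeasure, h.speed_pos, h.nonneg, h.integrable]
    with ε _ hpos hnonneg hint
  have hexp_int : Integrable (fun ω => Real.exp (-(s * κ ε 1 ω))) (μ ε) := by
    refine Integrable.of_bound
      (Real.continuous_exp.comp_aestronglyMeasurable ((hint 1).const_mul s).neg.1) 1
      (ae_of_all _ fun ω => ?_)
    rw [Real.norm_of_nonneg (Real.exp_pos _).le]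
    exact Real.exp_le_one_iff.mpr (neg_nonpos.mpr (mul_nonneg hs.le (hnonneg 1 ω)))
  have habs_int : Integrable (fun ω => 2 * |(a ε)⁻¹ * κ ε 1 ω - 1|) (μ ε) :=
    ((((hint 1).const_mul _).sub (integrable_const 1)).abs).const_mul 2
  have hpointwise (ω : Ω) : |Real.exp (-(s * κ ε 1 ω)) - Real.exp (-(s * a ε))| ≤
      2 * |(a ε)⁻¹ * κ ε 1 ω - 1| := by
    have := abs_exp_neg_mul_sub_exp_neg_le (mul_pos hs hpos).le
      (mul_nonneg (inv_nonneg.mpr hpos.le) (hnonneg 1 ω))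
    rwa [mul_assoc, mul_inv_cancel_left₀ hpos.ne'] at this
  calc dist (∫ ω, Real.exp (-(s * κ ε 1 ω)) ∂μ ε) (Real.exp (-(s * a ε)))
      = ‖∫ ω, (Real.exp (-(s * κ ε 1 ω)) - Real.exp (-(s * a ε))) ∂μ ε‖ := by
        rw [integral_sub hexp_int (integrable_const _), integral_const, probReal_univ, one_smul,
          dist_eq_norm]
    _ ≤ ∫ ω, 2 * |(a ε)⁻¹ * κ ε 1 ω - 1| ∂μ ε :=
        norm_integral_le_of_norm_le habs_int (ae_of_all _ hpointwise)
    _ = 2 * ∫ ω, |(a ε)⁻¹ * κ ε 1 ω - 1| ∂μ ε := integral_const_mul _ _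

lemma tendsto_integral_exp_iff (h : IsAsymptoticallyLinear μ l κ a) (hs : 0 < s) :
    Tendsto (fun ε => ∫ ω, Real.exp (-(s * κ ε 1 ω)) ∂μ ε) l (𝓝 c) ↔
      Tendsto (fun ε => Real.exp (-(s * a ε))) l (𝓝 c) :=
  tendsto_iff_of_dist (h.tendsto_dist_integral_exp hs)

lemma tendsto_integral_exp (h : IsAsymptoticallyLinear μ l κ a) (hs : 0 < s)
    (ha : Tendsto (fun ε => ENNReal.ofReal (a ε)) l (𝓝 f₀)) :
    Tendsto (fun ε => ∫ ω, Real.exp (-(s * κ ε 1 ω)) ∂μ ε) l (𝓝 (constLaplace f₀ s)) :=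
  (h.tendsto_integral_exp_iff hs).mpr (tendsto_exp_neg_mul_constLaplace h.speed_pos ha hs)

lemma exists_tendsto_speed_iff (h : IsAsymptoticallyLinear μ l κ a) :
    (∃ f₀ : ℝ≥0∞, Tendsto (fun ε => ENNReal.ofReal (a ε)) l (𝓝 f₀)) ↔
      ∃ L : ℝ → ℝ, ∀ s > 0,
        Tendsto (fun ε => ∫ ω, Real.exp (-(s * κ ε 1 ω)) ∂μ ε) l (𝓝 (L s)) := by
  refine ⟨fun ⟨f₀, ha⟩ => ⟨constLaplace f₀, fun s hs => h.tendsto_integral_exp hs ha⟩,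
    fun ⟨L, hL⟩ => exists_tendsto_ofReal_of_tendsto_exp_neg (c := L 1) ?_⟩
  simpa only [one_mul] using (h.tendsto_integral_exp_iff one_pos).mp (hL 1 one_pos)

lemma tendsto_min (h : IsAsymptoticallyLinear μ l κ a) (ha : Tendsto a l atTop) (ht : 0 < t) :
    Tendsto (fun z : E × Ω => min T (κ z.1 t z.2)) (highProbability μ l) (𝓝 T) :=
  tendsto_const_nhds.congr' <|
    ((h.tendsto_atTop ha ht).eventually_ge_atTop T).mono fun _ hz => (min_eq_left hz).symm

lemma tendsto_measure_exists_lt_abs_inv_mul_sub (h : IsAsymptoticallyLinear μ l κ a)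
    (T : ℝ) {δ : ℝ} (hδ : 0 < δ) :
    Tendsto (fun ε => (μ ε {ω | ∃ t, 0 ≤ t ∧ t ≤ T ∧ δ < |(a ε)⁻¹ * κ ε t ω - t|}).toReal)
      l (𝓝 0) :=
  tendsto_toReal_measure_exists_lt_abs_sub h.tendstoUniformlyOn_inv_mul hδ

lemma tendsto_measure_exists_lt_abs_sub (h : IsAsymptoticallyLinear μ l κ a)
    (ha : Tendsto a l (𝓝 c)) (T : ℝ) {δ : ℝ} (hδ : 0 < δ) :
    Tendsto (fun ε => (μ ε {ω | ∃ t, 0 ≤ t ∧ t ≤ T ∧ δ < |κ ε t ω - c * t|}).toReal) l (𝓝 0) :=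
  tendsto_toReal_measure_exists_lt_abs_sub (h.tendstoUniformlyOn_mul ha) hδ

lemma tendsto_measure_lt_abs_sub (h : IsAsymptoticallyLinear μ l κ a)
    (ha : Tendsto a l (𝓝 c)) (ht : 0 ≤ t) {δ : ℝ} (hδ : 0 < δ) :
    Tendsto (fun ε => (μ ε {ω | δ < |κ ε t ω - c * t|}).toReal) l (𝓝 0) :=
  tendsto_toReal_measure_lt_abs_sub (h.tendsto_mul ha ht) hδ

lemma tendsto_measure_le (h : IsAsymptoticallyLinear μ l κ a) (ha : Tendsto a l atTop)
    (ht : 0 < t) (y : ℝ) : Tendsto (fun ε => (μ ε {ω | κ ε t ω ≤ y}).toReal) l (𝓝 0) :=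
  tendsto_toReal_measure_of_eventually_not <|
    ((h.tendsto_atTop ha ht).eventually_gt_atTop y).mono fun _ => not_le_of_gt

lemma tendsto_measure_lt_abs_min_sub (h : IsAsymptoticallyLinear μ l κ a)
    (ha : Tendsto a l atTop) (ht : 0 < t) (T : ℝ) {δ : ℝ} (hδ : 0 < δ) :
    Tendsto (fun ε => (μ ε {ω | δ < |min T (κ ε t ω) - T|}).toReal) l (𝓝 0) :=
  tendsto_toReal_measure_lt_abs_sub (h.tendsto_min ha ht) hδ

end IsAsymptoticallyLinear

end AsymptoticallyLinear

section StepSum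

open Matrix

lemma abs_floor_mul_mul_inv_sub_le {v t : ℝ} (hv : 0 < v) (ht : 0 ≤ t) :
    |⌊t * v⌋₊ * v⁻¹ - t| ≤ v⁻¹ := by
  have hfloor : |⌊t * v⌋₊ - t * v| ≤ 1 :=
    abs_le.mpr ⟨by linarith [Nat.lt_floor_add_one (t * v)],
      by linarith [Nat.floor_le (mul_nonneg ht hv.le)]⟩
  calc |⌊t * v⌋₊ * v⁻¹ - t| = |⌊t * v⌋₊ - t * v| * v⁻¹ := by
        rw [← abs_of_pos (inv_pos.mpr hv), ← abs_mul, abs_of_pos (inv_pos.mpr hv), sub_mul,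
          mul_inv_cancel_right₀ hv.ne']
    _ ≤ v⁻¹ := mul_le_of_le_one_left (inv_pos.mpr hv).le hfloor

lemma IsMarkovChain.integral_sq_inv_mul_sum_sub_le {ι Ω : Type*} [Fintype ι] [DecidableEq ι]
    [MeasurableSpace ι] [MeasurableSingletonClass ι] [MeasurableSpace Ω] {μ : Measure Ω}
    [IsProbabilityMeasure μ] {X : ℕ → Ω → ι} {P : Matrix ι ι ℝ} {f π : ι → ℝ}
    (hX : IsMarkovChain μ X P) (hP : P ∈ rowStochastic ℝ ι) {K : ℕ} {b : ℝ} (hb : 0 < b)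
    (hirr : UniformlyIrreducible P K b) (hπ : π ∈ stdSimplex ℝ ι) (hπP : π ᵥ* P = π)
    (hf : ∀ i, 0 ≤ f i) (hmean : 0 < π ⬝ᵥ f) {v t : ℝ} (hv : 0 < v) (ht : 0 ≤ t) :
    ∫ ω, ((v * (π ⬝ᵥ f))⁻¹ * ∑ k ∈ Finset.range ⌊t * v⌋₊, f (X k ω) - t) ^ 2 ∂μ ≤
      16 * (K / b) ^ 2 * (t * v⁻¹ + v⁻¹ ^ 2) + 2 * v⁻¹ ^ 2 := by
  set F := π ⬝ᵥ f
  set n := ⌊t * v⌋₊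
  have hn_le : (n : ℝ) ≤ t * v := Nat.floor_le (by positivity)
  let S : (ℕ → ι) → ℝ := fun x => ∑ k ∈ Finset.range n, (f (x k) - F)
  have hS : ∫ ω, S (X · ω) ^ 2 ∂μ ≤ 8 * (n + 1) * (K / b * F) ^ 2 :=
    hX.integral_sq_sum_sub_le hP hb hirr hπ hπP hf n
  have hSint : Integrable (fun ω => ((v * F)⁻¹ * S (X · ω)) ^ 2) μ :=
    integrable_comp_path (F := fun x => ((v * F)⁻¹ * S x) ^ 2) (n := n) hX.measurable
      fun x y hxy => congrArg (fun s => ((v * F)⁻¹ * s) ^ 2) <| Finset.sum_congr rfl fun k hk => by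
        rw [hxy k (Finset.mem_range.mp hk).le]
  have hround (x : ℕ → ι) :
      |(v * F)⁻¹ * ∑ k ∈ Finset.range n, f (x k) - t - (v * F)⁻¹ * S x| ≤ v⁻¹ := by
    have hround_floor : |n * v⁻¹ - t| ≤ v⁻¹ := abs_floor_mul_mul_inv_sub_le hv ht
    convert hround_floor using 2
    simp only [S, Finset.sum_sub_distrib, Finset.sum_const, Finset.card_range, nsmul_eq_mul]
    field_simp
    ring
  calc ∫ ω, ((v * F)⁻¹ * ∑ k ∈ Finset.range n, f (X k ω) - t) ^ 2 ∂μ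
      ≤ 2 * ∫ ω, ((v * F)⁻¹ * S (X · ω)) ^ 2 ∂μ + 2 * v⁻¹ ^ 2 :=
        integral_sq_le_of_abs_sub_le hSint fun ω => hround (X · ω)
    _ = 2 * ((v * F)⁻¹ ^ 2 * ∫ ω, S (X · ω) ^ 2 ∂μ) + 2 * v⁻¹ ^ 2 := by
        simp only [mul_pow, integral_const_mul]
    _ ≤ 2 * ((v * F)⁻¹ ^ 2 * (8 * (t * v + 1) * (K / b * F) ^ 2)) + 2 * v⁻¹ ^ 2 := by
        gcongr
        exact hS.trans (by gcongr)
    _ = 16 * (K / b) ^ 2 * (t * v⁻¹ + v⁻¹ ^ 2) + 2 * v⁻¹ ^ 2 := by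
        field_simp
        ring

end StepSum

section StepSumProcess

open Matrix

variable {m : ℕ} {Ω : Type} {η : ℝ → ℕ → Ω → Fin m} {p : ℝ → Matrix (Fin m) (Fin m) ℝ}
  {π f : ℝ → Fin m → ℝ} {v : ℝ → ℝ} {ε : ℝ}

lemma IsStationaryDist.mem_stdSimplex {P : Matrix (Fin m) (Fin m) ℝ} {π : Fin m → ℝ}
    (h : IsStationaryDist P π) : π ∈ stdSimplex ℝ (Fin m) :=
  ⟨h.1, h.2.1⟩

lemma IsStationaryDist.vecMul_eq {P : Matrix (Fin m) (Fin m) ℝ} {π : Fin m → ℝ}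
    (h : IsStationaryDist P π) : π ᵥ* P = π :=
  funext fun j => (h.2.2 j).symm

lemma fStep_eq_sum_range (t : ℝ) (ω : Ω) :
    fStep η f v ε t ω = ∑ k ∈ Finset.range ⌊t * v ε⌋₊, f ε (η ε k ω) := by
  rw [fStep, ← Finset.Ico_add_one_right_eq_Icc, Finset.sum_Ico_eq_sum_range]
  simp

lemma fStep_nonneg (hf : ∀ i, 0 ≤ f ε i) (t : ℝ) (ω : Ω) : 0 ≤ fStep η f v ε t ω :=
  Finset.sum_nonneg fun _ _ => hf _

lemma monotone_fStep (hf : ∀ i, 0 ≤ f ε i) (hv : 0 ≤ v ε) (ω : Ω) :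
    Monotone (fStep η f v ε · ω) := fun _ _ hst =>
  Finset.sum_le_sum_of_subset_of_nonneg
    (Finset.Icc_subset_Icc_right (Nat.floor_mono (mul_le_mul_of_nonneg_right hst hv)))
    fun _ _ _ => hf _

variable [MeasurableSpace Ω] {Pq : ℝ → Measure Ω} {l : Filter ℝ}

lemma integrable_comp_fStep {μ : Measure Ω} [IsFiniteMeasure μ] (hη : ∀ n, Measurable (η ε n))
    (g : ℝ → ℝ) (t : ℝ) : Integrable (fun ω => g (fStep η f v ε t ω)) μ := by
  simp only [fStep_eq_sum_range]
  exact integrable_comp_path (n := ⌊t * v ε⌋₊)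
    (F := fun x => g (∑ k ∈ Finset.range ⌊t * v ε⌋₊, f ε (x k))) hη fun x y hxy =>
      congrArg g <| Finset.sum_congr rfl fun k hk => by rw [hxy k (Finset.mem_range.mp hk).le]

lemma integral_sq_inv_mul_fStep_sub_le {μ : Measure Ω} [IsProbabilityMeasure μ]
    (hX : IsMarkovChain μ (η ε) (p ε)) (hP : p ε ∈ rowStochastic ℝ (Fin m)) {K : ℕ} {b : ℝ}
    (hb : 0 < b) (hirr : UniformlyIrreducible (p ε) K b) (hπ : IsStationaryDist (p ε) (π ε))
    (hf : ∀ i, 0 ≤ f ε i) (hv : 0 < v ε) (hH : 0 < fBar π f v ε) {t : ℝ} (ht : 0 ≤ t) :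
    ∫ ω, ((fBar π f v ε)⁻¹ * fStep η f v ε t ω - t) ^ 2 ∂μ ≤
      16 * (K / b) ^ 2 * (t * (v ε)⁻¹ + (v ε)⁻¹ ^ 2) + 2 * (v ε)⁻¹ ^ 2 := by
  simp only [fStep_eq_sum_range]
  exact hX.integral_sq_inv_mul_sum_sub_le hP hb hirr hπ.mem_stdSimplex hπ.vecMul_eq hf
    (pos_of_mul_pos_right hH hv.le) hv ht

lemma tendsto_integral_abs_inv_mul_fStep_sub
    (hX : ∀ᶠ ε in l, IsProbabilityMeasure (Pq ε) ∧ IsMarkovChain (Pq ε) (η ε) (p ε))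
    (hP : ∀ᶠ ε in l, p ε ∈ rowStochastic ℝ (Fin m)) {K : ℕ} {b : ℝ} (hb : 0 < b)
    (hirr : ∀ᶠ ε in l, UniformlyIrreducible (p ε) K b)
    (hπ : ∀ᶠ ε in l, IsStationaryDist (p ε) (π ε)) (hf : ∀ᶠ ε in l, ∀ i, 0 ≤ f ε i)
    (hv : Tendsto v l atTop) (hH : ∀ᶠ ε in l, 0 < fBar π f v ε) {t : ℝ} (ht : 0 ≤ t) :
    Tendsto (fun ε => ∫ ω, |(fBar π f v ε)⁻¹ * fStep η f v ε t ω - t| ∂Pq ε) l (𝓝 0) := by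
  have hbound : Tendsto (fun ε => √(16 * (K / b) ^ 2 * (t * (v ε)⁻¹ + (v ε)⁻¹ ^ 2) +
      2 * (v ε)⁻¹ ^ 2)) l (𝓝 0) := by
    have hinv := hv.inv_tendsto_atTop
    simpa using ((((hinv.const_mul t).add (hinv.pow 2)).const_mul (16 * (K / b) ^ 2)).add
      ((hinv.pow 2).const_mul 2)).sqrt
  refine squeeze_zero' (Eventually.of_forall fun _ => integral_nonneg fun _ => abs_nonneg _)
    ?_ hbound
  filter_upwards [hX, hP, hirr, hπ, hf, hv.eventually_gt_atTop 0, hH]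
    with ε ⟨_, hXε⟩ hPε hirrε hπε hfε hvε hHε
  exact Real.le_sqrt_of_sq_le <| (sq_integral_abs_le_integral_sq
    (integrable_comp_fStep hXε.measurable (fun y => (fBar π f v ε)⁻¹ * y - t) t)
    (integrable_comp_fStep hXε.measurable (fun y => ((fBar π f v ε)⁻¹ * y - t) ^ 2) t)).trans
      (integral_sq_inv_mul_fStep_sub_le hXε hPε hb hirrε hπε hfε hvε hHε ht)

lemma isAsymptoticallyLinear_fStep_of_uniformlyIrreducible
    (hX : ∀ᶠ ε in l, IsProbabilityMeasure (Pq ε) ∧ IsMarkovChain (Pq ε) (η ε) (p ε))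
    (hP : ∀ᶠ ε in l, p ε ∈ rowStochastic ℝ (Fin m)) {K : ℕ} {b : ℝ} (hb : 0 < b)
    (hirr : ∀ᶠ ε in l, UniformlyIrreducible (p ε) K b)
    (hπ : ∀ᶠ ε in l, IsStationaryDist (p ε) (π ε)) (hf : ∀ᶠ ε in l, ∀ i, 0 ≤ f ε i)
    (hv : Tendsto v l atTop) (hH : ∀ᶠ ε in l, 0 < fBar π f v ε) :
    IsAsymptoticallyLinear Pq l (fStep η f v) (fBar π f v) where
  isProbabilityMeasure := hX.mono fun _ h => h.1
  speed_pos := hH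
  nonneg := hf.mono fun _ h => fStep_nonneg h
  monotone := by
    filter_upwards [hf, hv.eventually_ge_atTop 0] with ε hfε hvε using monotone_fStep hfε hvε
  integrable := by
    filter_upwards [hX] with ε ⟨_, hXε⟩ t using integrable_comp_fStep hXε.measurable id t
  tendsto_integral_abs_sub _ ht :=
    tendsto_integral_abs_inv_mul_fStep_sub hX hP hb hirr hπ hf hv hH ht

lemma CondB.isAsymptoticallyLinear_fStep {Pstart : ℝ → Fin m → Measure Ω} {q : ℝ → Fin m → ℝ}
    (hB : CondB p) (hfam : ∀ᶠ ε in 𝓝[>] 0, IsMarkovFamily (Pstart ε) (η ε) (p ε))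
    (hq : ∀ᶠ ε in 𝓝[>] 0, q ε ∈ stdSimplex ℝ (Fin m))
    (hmix : ∀ᶠ ε in 𝓝[>] 0, Pq ε = ∑ i, ENNReal.ofReal (q ε i) • Pstart ε i)
    (hπ : ∀ᶠ ε in 𝓝[>] 0, IsStationaryDist (p ε) (π ε))
    (hf : ∀ᶠ ε in 𝓝[>] 0, ∀ i, 0 ≤ f ε i) (hv : Tendsto v (𝓝[>] 0) atTop)
    (hH : ∀ᶠ ε in 𝓝[>] 0, 0 < fBar π f v ε) :
    IsAsymptoticallyLinear Pq (𝓝[>] 0) (fStep η f v) (fBar π f v) := by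
  have hP : ∀ᶠ ε in 𝓝[>] 0, p ε ∈ rowStochastic ℝ (Fin m) := by
    filter_upwards [hfam, hB.isUniformlyConnected.eventually_reflTransGen] with ε hε hirr
      using hε.mem_rowStochastic hirr
  obtain ⟨K, b, hb, hirr⟩ := hB.isUniformlyConnected.exists_eventually_uniformlyIrreducible hP
  refine isAsymptoticallyLinear_fStep_of_uniformlyIrreducible ?_ hP hb hirr hπ hf hv hH
  filter_upwards [hfam, hP, hq, hmix] with ε hε hPε hqε hmixε
  rw [hmixε]
  exact ⟨hε.isProbabilityMeasure_sum_smul hqε,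
    hε.isMarkovChain_sum_smul (fun i j => nonneg_of_mem_rowStochastic hPε) (q ε)⟩

end StepSumProcess

/-- Lemma 6: under conditions B and H:
(i) `f_ε⁻¹ κ_ε(·)` converges to the identity uniformly on compacts in probability;
(ii) condition I (`f_ε → f₀ ∈ [0,∞]`) is necessary and sufficient for convergence in
distribution (with possibly improper limit) of `κ_ε(1)`, the limit being the constant
`f₀`, with convergence `κ_ε(t) → f₀ t` in probability for every `t > 0`;
(iii) if `f₀ < ∞`, `κ_ε(·) → f₀ ·` uniformly on compacts in probability;
(iv) if `f₀ = ∞`, `min(T, κ_ε(t)) → T` in probability. -/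
theorem stmt13 {m : ℕ} (hm : 0 < m) (ε₀ : ℝ) (hε₀ : 0 < ε₀)
    {Ω : Type} [MeasurableSpace Ω]
    (η : ℝ → ℕ → Ω → Fin m)
    (Pstart : ℝ → Fin m → Measure Ω)
    (hprob : ∀ ε i, IsProbabilityMeasure (Pstart ε i))
    (hmeas : ∀ ε n, Measurable (η ε n))
    (p : ℝ → Fin m → Fin m → ℝ)
    (hMC : ∀ ε ∈ Ioc (0:ℝ) ε₀, ∀ n : ℕ, ∀ I : ℕ → Fin m,
      Pstart ε (I 0) {ω | ∀ k ≤ n, η ε k ω = I k}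
        = ENNReal.ofReal (∏ k ∈ Finset.Icc 1 n, p ε (I (k - 1)) (I k)))
    (hB : CondB p)
    (π : ℝ → Fin m → ℝ)
    (hπ : ∀ᶠ ε in 𝓝[>] (0:ℝ), IsStationaryDist (fun i j => p ε i j) (π ε))
    (q : ℝ → Fin m → ℝ) (Pq : ℝ → Measure Ω)
    (hq : ∀ ε ∈ Ioc (0:ℝ) ε₀, (∀ i, 0 ≤ q ε i) ∧ ∑ i, q ε i = 1)
    (hmix : ∀ ε ∈ Ioc (0:ℝ) ε₀, Pq ε = ∑ i, ENNReal.ofReal (q ε i) • Pstart ε i)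
    (v : ℝ → ℝ) (hvpos : ∀ ε ∈ Ioc (0:ℝ) ε₀, 0 < v ε)
    (hvinf : Tendsto v (𝓝[>] (0:ℝ)) atTop)
    (f : ℝ → Fin m → ℝ) (hf : ∀ ε ∈ Ioc (0:ℝ) ε₀, ∀ i, 0 ≤ f ε i)
    -- condition H
    (hH : ∀ᶠ ε in 𝓝[>] (0:ℝ), 0 < fBar π f v ε) :
    -- (i) f_ε⁻¹ κ_ε(·) converges to the identity uniformly on compacts in probability
    (∀ T > (0:ℝ), ∀ δ > (0:ℝ),
      Tendsto (fun ε => (Pq ε {ω | ∃ t, 0 ≤ t ∧ t ≤ T ∧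
          δ < |(fBar π f v ε)⁻¹ * fStep η f v ε t ω - t|}).toReal)
        (𝓝[>] (0:ℝ)) (𝓝 0)) ∧
    -- (ii) condition I is necessary and sufficient for convergence in distribution
    -- (with possibly improper limit) of κ_ε(1)
    ((∃ f₀ : ℝ≥0∞, Tendsto (fun ε => ENNReal.ofReal (fBar π f v ε)) (𝓝[>] (0:ℝ)) (𝓝 f₀)) ↔
      (∃ L : ℝ → ℝ, ∀ s > 0,
        Tendsto (fun ε => ∫ ω, Real.exp (-(s * fStep η f v ε 1 ω)) ∂(Pq ε))
          (𝓝[>] (0:ℝ)) (𝓝 (L s)))) ∧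
    ∀ f₀ : ℝ≥0∞, Tendsto (fun ε => ENNReal.ofReal (fBar π f v ε)) (𝓝[>] (0:ℝ)) (𝓝 f₀) →
      -- in this case the limiting (possibly improper) random variable is the constant f₀
      (∀ s > 0,
        (f₀ = ⊤ → Tendsto (fun ε => ∫ ω, Real.exp (-(s * fStep η f v ε 1 ω)) ∂(Pq ε))
          (𝓝[>] (0:ℝ)) (𝓝 0)) ∧
        (f₀ ≠ ⊤ → Tendsto (fun ε => ∫ ω, Real.exp (-(s * fStep η f v ε 1 ω)) ∂(Pq ε))
          (𝓝[>] (0:ℝ)) (𝓝 (Real.exp (-(s * f₀.toReal)))))) ∧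
      -- and κ_ε(t) → f₀ t in probability for every t > 0
      (∀ t > (0:ℝ),
        (f₀ = ⊤ → ∀ c : ℝ, Tendsto (fun ε => (Pq ε {ω | fStep η f v ε t ω ≤ c}).toReal)
          (𝓝[>] (0:ℝ)) (𝓝 0)) ∧
        (f₀ ≠ ⊤ → ∀ δ > (0:ℝ),
          Tendsto (fun ε => (Pq ε {ω | δ < |fStep η f v ε t ω - f₀.toReal * t|}).toReal)
            (𝓝[>] (0:ℝ)) (𝓝 0))) ∧
      -- (iii) if f₀ < ∞, uniform convergence on compacts in probability to f₀ t
      (f₀ ≠ ⊤ → ∀ T > (0:ℝ), ∀ δ > (0:ℝ),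
        Tendsto (fun ε => (Pq ε {ω | ∃ t, 0 ≤ t ∧ t ≤ T ∧
            δ < |fStep η f v ε t ω - f₀.toReal * t|}).toReal)
          (𝓝[>] (0:ℝ)) (𝓝 0)) ∧
      -- (iv) if f₀ = ∞, min(T, κ_ε(t)) → T in probability
      (f₀ = ⊤ → ∀ T > (0:ℝ), ∀ t > (0:ℝ), ∀ δ > (0:ℝ),
        Tendsto (fun ε => (Pq ε {ω | δ < |min T (fStep η f v ε t ω) - T|}).toReal)
          (𝓝[>] (0:ℝ)) (𝓝 0)) := by
  have hsmall : ∀ᶠ ε in 𝓝[>] (0 : ℝ), ε ∈ Ioc 0 ε₀ := Ioc_mem_nhdsGT hε₀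
  have h : IsAsymptoticallyLinear Pq (𝓝[>] 0) (fStep η f v) (fBar π f v) :=
    hB.isAsymptoticallyLinear_fStep
      (hsmall.mono fun ε hε => .of_measure_eq_prod_Icc (hmeas ε) (hMC ε hε))
      (hsmall.mono hq) (hsmall.mono hmix) hπ (hsmall.mono hf) hvinf hH
  refine ⟨fun T _ δ => h.tendsto_measure_exists_lt_abs_inv_mul_sub T,
    h.exists_tendsto_speed_iff, fun f₀ hf₀ => ?_⟩
  rcases eq_or_ne f₀ ⊤ with rfl | hfin
  · have hspeed := ENNReal.tendsto_ofReal_nhds_top.mp hf₀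
    exact ⟨fun s hs => ⟨fun _ => constLaplace_top s ▸ h.tendsto_integral_exp hs hf₀, absurd rfl⟩,
      fun t ht => ⟨fun _ => h.tendsto_measure_le hspeed ht, absurd rfl⟩, absurd rfl,
      fun _ T _ t ht δ => h.tendsto_measure_lt_abs_min_sub hspeed ht T⟩
  · have hspeed := tendsto_of_tendsto_ofReal h.speed_pos hfin hf₀
    exact ⟨fun s hs => ⟨fun htop => absurd htop hfin, fun _ =>
        constLaplace_of_ne_top hfin s ▸ h.tendsto_integral_exp hs hf₀⟩,
      fun t ht => ⟨fun htop => absurd htop hfin, fun _ δ =>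
        h.tendsto_measure_lt_abs_sub hspeed ht.le⟩,
      fun _ T _ δ => h.tendsto_measure_exists_lt_abs_sub hspeed T,
      fun htop => absurd htop hfin⟩
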